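/- Let k ∈ {1,2} and let C > 0. There exists C' > 0 such that for all z ∈ K, all ζ' ∈ ℝ × ℝ^n, all t̂ ∈ ℝ × ℝ^n × ℝ with t̂_{ξd} > 0, and every h ∈ ℂ with h² = m̂_k(z,ζ',t̂) and Re h ≥ 0: if μ̂_k(z,ζ',t̂) ≥ C (|t̂|² + |ζ'|²)², then Im ρ̂_{k,+} = −t̂_{ξd} + Re h ≥ C' λ̂. -/

import Mathlib

/-- `m̂_k(z,ζ',t̂) = (-1)^k i (σ + i t̂_σ)² + r_z(ξ' + i t̂_{ξ'})`, where `r_z` is the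
complex-bilinear extension of the quadratic form with coefficient matrix `R`. -/
noncomputable def mhat {n : ℕ} (R : Fin n → Fin n → ℝ) (k : ℕ)
    (σ : ℝ) (ξ : Fin n → ℝ) (tσ : ℝ) (tξ : Fin n → ℝ) : ℂ :=
  (-1 : ℂ) ^ k * Complex.I * ((σ : ℂ) + Complex.I * (tσ : ℂ)) ^ 2 +
    ∑ j, ∑ l, (R j l : ℂ) * ((ξ j : ℂ) + Complex.I * (tξ j : ℂ)) *
      ((ξ l : ℂ) + Complex.I * (tξ l : ℂ))

/-- `μ̂_k = 4 t̂_{ξd}² Re m̂_k − 4 t̂_{ξd}⁴ + (Im m̂_k)²`. -/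
noncomputable def muhat {n : ℕ} (R : Fin n → Fin n → ℝ) (k : ℕ)
    (σ : ℝ) (ξ : Fin n → ℝ) (tσ : ℝ) (tξ : Fin n → ℝ) (tξd : ℝ) : ℝ :=
  4 * tξd ^ 2 * (mhat R k σ ξ tσ tξ).re - 4 * tξd ^ 4 + (mhat R k σ ξ tσ tξ).im ^ 2

theorem norm_sq_add_I (x y : ℝ) : ‖(x : ℂ) + Complex.I * (y : ℂ)‖ ^ 2 = x ^ 2 + y ^ 2 := by
  rw [← Complex.normSq_eq_norm_sq, Complex.normSq_apply]
  simp
  ring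

theorem mhat_bound {n : ℕ} (R B : Fin n → Fin n → ℝ) (hB : ∀ j l, |R j l| ≤ B j l) (k : ℕ)
    (σ : ℝ) (ξ : Fin n → ℝ) (tσ : ℝ) (tξ : Fin n → ℝ) (L : ℝ) (h1 : σ ^ 2 + tσ ^ 2 ≤ L)
    (h2 : ∀ j, ξ j ^ 2 + tξ j ^ 2 ≤ L) :
    ‖mhat R k σ ξ tσ tξ‖ ≤ (1 + ∑ j, ∑ l, B j l) * L := by
  have hL : 0 ≤ L := le_trans (by positivity) h1
  unfold mhat
  refine (norm_add_le _ _).trans ?_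
  rw [add_mul, one_mul]
  apply add_le_add
  · rw [norm_mul, norm_mul, norm_pow, norm_pow, norm_sq_add_I]
    simpa using h1
  · rw [Finset.sum_mul]
    refine (norm_sum_le _ _).trans (Finset.sum_le_sum fun j _ => ?_)
    rw [Finset.sum_mul]
    refine (norm_sum_le _ _).trans (Finset.sum_le_sum fun l _ => ?_)
    rw [norm_mul, norm_mul, mul_assoc, Complex.norm_real, Real.norm_eq_abs]
    have hj := norm_sq_add_I (ξ j) (tξ j)
    have hl := norm_sq_add_I (ξ l) (tξ l)
    refine mul_le_mul (hB j l) ?_ (by positivity) ((abs_nonneg _).trans (hB j l))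
    have a1 := h2 j
    have a2 := h2 l
    rw [← hj] at a1
    rw [← hl] at a2
    nlinarith [sq_nonneg (‖(ξ j : ℂ) + Complex.I * (tξ j : ℂ)‖ - ‖(ξ l : ℂ) + Complex.I * (tξ l : ℂ)‖)]

/-- If `μ̂_k ≥ C λ̂⁴` (with `t̂_{ξd} > 0`), then `Im ρ̂_{k,+} = −t̂_{ξd} + Re h ≥ C' λ̂`. -/
theorem stmt7 (n : ℕ) (K : Type*) [MetricSpace K] [CompactSpace K]
    (R : K → Fin n → Fin n → ℝ)
    (hRcont : ∀ j l, Continuous fun z => R z j l)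
    (c : ℝ) (hc : 0 < c)
    (hpd : ∀ (z : K) (η : Fin n → ℝ), c * (∑ j, (η j) ^ 2) ≤ ∑ j, ∑ l, R z j l * η j * η l)
    (k : ℕ) (hk : k = 1 ∨ k = 2) (C : ℝ) (hC : 0 < C) :
    ∃ C' > 0, ∀ (z : K) (σ : ℝ) (ξ : Fin n → ℝ) (tσ : ℝ) (tξ : Fin n → ℝ) (tξd : ℝ) (h : ℂ),
      0 < tξd →
      h ^ 2 = mhat (R z) k σ ξ tσ tξ →
      0 ≤ h.re →
      C * ((tσ ^ 2 + (∑ j, (tξ j) ^ 2) + tξd ^ 2) + (σ ^ 2 + ∑ j, (ξ j) ^ 2)) ^ 2 ≤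
        muhat (R z) k σ ξ tσ tξ tξd →
      C' * Real.sqrt ((tσ ^ 2 + (∑ j, (tξ j) ^ 2) + tξd ^ 2) + (σ ^ 2 + ∑ j, (ξ j) ^ 2)) ≤
        -tξd + h.re := by
  have hb : ∀ j l, ∃ b : ℝ, ∀ z, |R z j l| ≤ b := fun j l => by
    obtain ⟨b, hb⟩ := (isCompact_range (hRcont j l)).isBounded.exists_norm_le
    exact ⟨b, fun z => hb _ ⟨z, rfl⟩⟩
  choose B hB using hb
  set S : ℝ := ∑ j, ∑ l, |B j l| with hS
  have hS0 : 0 ≤ S := by positivity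
  obtain ⟨M, hM⟩ : ∃ M : ℝ, M = 1 + S := ⟨_, rfl⟩
  have hM1 : 1 ≤ M := by linarith
  refine ⟨C / (4 * (1 + M) ^ 2), by positivity, ?_⟩
  intro z σ ξ tσ tξ t h ht hh hre hmu
  set L : ℝ := (tσ ^ 2 + (∑ j, (tξ j) ^ 2) + t ^ 2) + (σ ^ 2 + ∑ j, (ξ j) ^ 2) with hL
  have e1 : 0 ≤ ∑ j, (tξ j) ^ 2 := by positivity
  have e2 : 0 ≤ ∑ j, (ξ j) ^ 2 := by positivity
  have hm : ‖mhat (R z) k σ ξ tσ tξ‖ ≤ M * L := by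
    rw [hM]
    refine mhat_bound (R z) (fun j l => |B j l|) (fun j l => (hB j l z).trans (le_abs_self _))
      k σ ξ tσ tξ L ?_ ?_
    · nlinarith [sq_nonneg t]
    · intro j
      have f1 : (tξ j) ^ 2 ≤ ∑ j, (tξ j) ^ 2 :=
        Finset.single_le_sum (f := fun j => (tξ j) ^ 2) (fun i _ => sq_nonneg _) (Finset.mem_univ j)
      have f2 : (ξ j) ^ 2 ≤ ∑ j, (ξ j) ^ 2 :=
        Finset.single_le_sum (f := fun j => (ξ j) ^ 2) (fun i _ => sq_nonneg _) (Finset.mem_univ j)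
      nlinarith [sq_nonneg t, sq_nonneg tσ, sq_nonneg σ]
  rw [← hh, norm_pow, ← Complex.normSq_eq_norm_sq, Complex.normSq_apply] at hm
  have htL : t ^ 2 ≤ L := by nlinarith [sq_nonneg tσ, sq_nonneg σ]
  have hLpos : 0 < L := lt_of_lt_of_le (by positivity) htL
  have hmu2 : C * L ^ 2 ≤ 4 * (h.re ^ 2 - t ^ 2) * (t ^ 2 + h.im ^ 2) := by
    refine hmu.trans (le_of_eq ?_)
    unfold muhat
    rw [← hh]
    simp only [pow_two, Complex.mul_re, Complex.mul_im]
    ring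
  clear_value L
  clear hmu hh
  generalize h.re = a at *
  generalize h.im = b at *
  obtain ⟨s, hs⟩ : ∃ s, s = Real.sqrt L := ⟨_, rfl⟩
  have hs0 : 0 < s := hs ▸ Real.sqrt_pos.2 hLpos
  have hsL : L = s ^ 2 := by rw [hs, Real.sq_sqrt hLpos.le]
  rw [← hs]
  rw [hsL] at hm htL hmu2
  have hts : t ≤ s := by nlinarith
  have has : a ≤ M * s := by
    refine le_of_abs_le (abs_le_of_sq_le_sq ?_ (by positivity))
    nlinarith [mul_pos hs0 hs0, mul_nonneg (mul_nonneg (sub_nonneg.2 hM1) (by linarith : 0 ≤ M)) (sq_nonneg s), sq_nonneg b]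
  have hq : t ^ 2 + b ^ 2 ≤ (1 + M) * s ^ 2 := by nlinarith [sq_nonneg a]
  have hq0 : 0 < t ^ 2 + b ^ 2 := by positivity
  have hat : 0 < a ^ 2 - t ^ 2 := by
    by_contra hcon
    have : 0 < C * (s ^ 2) ^ 2 := by positivity
    nlinarith [mul_nonneg (sub_nonneg.2 (not_lt.1 hcon)) hq0.le]
  have hat' : 0 < a - t := by nlinarith
  have k1 : C * (s ^ 2) ^ 2 ≤ 4 * ((a - t) * ((1 + M) * s)) * ((1 + M) * s ^ 2) := by
    refine hmu2.trans ?_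
    have : a ^ 2 - t ^ 2 ≤ (a - t) * ((1 + M) * s) := by
      rw [show a ^ 2 - t ^ 2 = (a - t) * (a + t) by ring]
      exact mul_le_mul_of_nonneg_left (by linarith) hat'.le
    have hp : 0 ≤ (a - t) * ((1 + M) * s) := hat.le.trans this
    exact mul_le_mul (by linarith) hq hq0.le (by linarith)
  have k2 : C * s ≤ (-t + a) * (4 * (1 + M) ^ 2) := by
    have : 0 < s ^ 3 := by positivity
    refine le_of_mul_le_mul_right ?_ this
    linarith
  rw [div_mul_eq_mul_div, div_le_iff₀ (by positivity)]
  exact k2
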